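/- arXiv:1901.04860 — 3 statements merged into one kernel-verified Lean document; each statement's English description precedes it below -/
import Mathlib

section
/- Let k ≥ 2 and n = 2^k, and let C ⊆ {-1,1}^n be a set such that no two elements of C have Hamming distance exactly n/2. Then |C| ≤ 4 · Σ_{i=0}^{2^{k-2} - 1} C(2^k - 1, i). -/
open Finset

/-!
Split `C` into four classes by the value at one coordinate and the parity of the weight. Within a
class all distances are even and the chosen coordinate can be deleted. With `n = 4 q`, where `q` is
a power of a prime `p`, half of a nonzero distance in a class is an integer `0 < e < 2 q` other than
`q`, hence not divisible by `q`, so `p` divides `(e - 1).choose (q - 1)`, whereas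
`(-1).choose (q - 1) = ±1`. The functions `y ↦ (d(x, y) / 2 - 1).choose (q - 1)`, for `x` in the
class, therefore have an evaluation matrix that is nonsingular modulo `p`. They are linearly
independent polynomials of degree at most `q - 1` in `n - 1` Boolean variables.
-/

section CubePolynomials

variable (R : Type*) {ι : Type*} [CommRing R]

/-- The squarefree monomial `∏ i ∈ S, y i` as a function on the cube `{0, 1} ^ ι`, written as the
indicator function of the points where all its variables are `1`. -/
noncomputable def cubeMonomial (S : Finset ι) : (ι → Bool) → R :=
  Set.indicator {y | ∀ i ∈ S, y i} 1

variable (ι) in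
/-- The functions on the cube `{0, 1} ^ ι` given by polynomials of degree at most `r`. Since
`y i ^ 2 = y i` there, squarefree monomials suffice. -/
noncomputable def cubeDegreeLE (r : ℕ) : Submodule R ((ι → Bool) → R) :=
  Submodule.span R (cubeMonomial R '' {S | #S ≤ r})

theorem cubeMonomial_empty : cubeMonomial R (∅ : Finset ι) = 1 := by
  simp [cubeMonomial]

theorem cubeMonomial_mul [DecidableEq ι] (S T : Finset ι) :
    cubeMonomial R S * cubeMonomial R T = cubeMonomial R (S ∪ T) := by
  simp only [cubeMonomial, ← Set.inter_indicator_one, mem_union, or_imp, forall_and,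
    Set.ofPred_and]

variable {R}

theorem cubeMonomial_mem_cubeDegreeLE {S : Finset ι} {r : ℕ} (hS : #S ≤ r) :
    cubeMonomial R S ∈ cubeDegreeLE R ι r :=
  Submodule.subset_span ⟨S, hS, rfl⟩

theorem cubeDegreeLE_mono : Monotone (cubeDegreeLE R ι) := fun _ _ hrs =>
  Submodule.span_mono (Set.image_mono fun _ hS => le_trans hS hrs)

theorem one_mem_cubeDegreeLE (r : ℕ) : 1 ∈ cubeDegreeLE R ι r :=
  cubeMonomial_empty R (ι := ι) ▸ cubeMonomial_mem_cubeDegreeLE (by simp)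

theorem mul_mem_cubeDegreeLE {r s : ℕ} {f g : (ι → Bool) → R}
    (hf : f ∈ cubeDegreeLE R ι r) (hg : g ∈ cubeDegreeLE R ι s) :
    f * g ∈ cubeDegreeLE R ι (r + s) := by
  classical
  have hfg := Submodule.mul_mem_mul hf hg
  rw [cubeDegreeLE, cubeDegreeLE, Submodule.span_mul_span] at hfg
  refine Submodule.span_mono ?_ hfg
  rintro _ ⟨_, ⟨S, hS, rfl⟩, _, ⟨T, hT, rfl⟩, rfl⟩
  exact ⟨S ∪ T, (card_union_le S T).trans (add_le_add hS hT), (cubeMonomial_mul R S T).symm⟩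

theorem pow_mem_cubeDegreeLE {r : ℕ} {f : (ι → Bool) → R} (hf : f ∈ cubeDegreeLE R ι r) (k : ℕ) :
    f ^ k ∈ cubeDegreeLE R ι (k * r) := by
  induction k with
  | zero => simpa using one_mem_cubeDegreeLE _
  | succ k ih => simpa only [pow_succ, add_one_mul] using mul_mem_cubeDegreeLE ih hf

theorem aeval_mem_cubeDegreeLE {S : Type*} [CommSemiring S] [Algebra S R] {r : ℕ}
    {f : (ι → Bool) → R} (hf : f ∈ cubeDegreeLE R ι r) (P : Polynomial S) :
    Polynomial.aeval f P ∈ cubeDegreeLE R ι (P.natDegree * r) := by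
  rw [Polynomial.aeval_eq_sum_range]
  refine Submodule.sum_mem _ fun k hk => Submodule.smul_of_tower_mem _ _ ?_
  have hk : k ≤ P.natDegree := Nat.lt_succ_iff.1 (mem_range.1 hk)
  exact cubeDegreeLE_mono (Nat.mul_le_mul_right r hk) (pow_mem_cubeDegreeLE hf k)

theorem ringChoose_mem_cubeDegreeLE {r : ℕ} {f : (ι → Bool) → ℚ} (hf : f ∈ cubeDegreeLE ℚ ι r)
    (k : ℕ) : (fun y => Ring.choose (f y) k) ∈ cubeDegreeLE ℚ ι (k * r) := by
  have hmem := (cubeDegreeLE ℚ ι _).smul_mem (k.factorial : ℚ)⁻¹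
    (aeval_mem_cubeDegreeLE hf (descPochhammer ℤ k))
  rw [descPochhammer_natDegree] at hmem
  convert hmem using 1
  funext y
  rw [Ring.choose_eq_smul, Pi.smul_apply, ← Polynomial.aeval_eq_smeval, Polynomial.aeval_pi_apply]

theorem hammingDist_mem_cubeDegreeLE [Fintype ι] (x : ι → Bool) :
    (fun y => (hammingDist x y : R)) ∈ cubeDegreeLE R ι 1 := by
  have hsum : (fun y => (hammingDist x y : R)) = ∑ i, fun y => if x i ≠ y i then 1 else 0 := by
    funext y
    simp [hammingDist, card_filter]
  rw [hsum]
  refine Submodule.sum_mem _ fun i _ => ?_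
  have hi : cubeMonomial R {i} ∈ cubeDegreeLE R ι 1 := cubeMonomial_mem_cubeDegreeLE (by simp)
  cases hx : x i
  · convert hi using 1
    funext y
    simp [cubeMonomial, Set.indicator_apply]
  · convert Submodule.sub_mem _ (one_mem_cubeDegreeLE 1) hi using 1
    funext y
    cases hy : y i <;> simp [cubeMonomial, hy]

theorem finrank_cubeDegreeLE_le [Fintype ι] [StrongRankCondition R] (r : ℕ) :
    Module.finrank R (cubeDegreeLE R ι r) ≤ ∑ i ∈ range (r + 1), (Fintype.card ι).choose i := by
  classical
  have hsets : {S : Finset ι | #S ≤ r} =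
      ((range (r + 1)).biUnion fun i => powersetCard i (univ : Finset ι)) := by
    ext S
    simp [mem_powersetCard]
  rw [cubeDegreeLE, hsets, ← coe_image]
  refine (finrank_span_finset_le_card _).trans (card_image_le.trans (card_biUnion_le.trans ?_))
  simp

end CubePolynomials

section Congruences

theorem not_dvd_det_of_prime {κ R : Type*} [Fintype κ] [DecidableEq κ] [CommRing R] {π : R}
    (hπ : Prime π) {A : Matrix κ κ R} (hdiag : ∀ a, ¬ π ∣ A a a)
    (hoff : Pairwise fun a b => π ∣ A a b) : ¬ π ∣ A.det := by
  have : (Ideal.span {π}).IsPrime := (Ideal.span_singleton_prime hπ.ne_zero).2 hπ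
  let φ := Ideal.Quotient.mk (Ideal.span {π})
  have hφ (r : R) : φ r = 0 ↔ π ∣ r := Ideal.Quotient.eq_zero_iff_dvd π r
  have hdiagonal : φ.mapMatrix A = Matrix.diagonal fun a => φ (A a a) := by
    ext a b
    rcases eq_or_ne a b with rfl | hab
    · simp
    · simpa [hab] using (hφ _).2 (hoff hab)
  rw [← hφ, φ.map_det, hdiagonal, Matrix.det_diagonal, prod_eq_zero_iff]
  rintro ⟨a, -, ha⟩
  exact hdiag a ((hφ _).1 ha)

theorem linearIndependent_of_prime_dvd_offDiag {κ X R K : Type*} [Finite κ] [CommRing R]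
    [CommRing K] [IsDomain K] [Algebra R K] [FaithfulSMul R K] {π : R} (hπ : Prime π)
    {f : κ → X → K} (x : κ → X) {A : Matrix κ κ R}
    (hA : ∀ a b, f a (x b) = algebraMap R K (A a b)) (hdiag : ∀ a, ¬ π ∣ A a a)
    (hoff : Pairwise fun a b => π ∣ A a b) : LinearIndependent K f := by
  classical
  have := Fintype.ofFinite κ
  have hdet : ((algebraMap R K).mapMatrix A).det ≠ 0 := by
    rw [← RingHom.map_det, map_ne_zero_iff _ (FaithfulSMul.algebraMap_injective R K)]
    exact fun h => not_dvd_det_of_prime hπ hdiag hoff (h ▸ dvd_zero π)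
  have hrows := Matrix.linearIndependent_rows_of_det_ne_zero hdet
  refine LinearIndependent.of_comp (LinearMap.funLeft K K x) ?_
  convert hrows using 1
  funext a b
  exact hA a b

theorem isUnit_ringChoose_neg_one (k : ℕ) : IsUnit (Ring.choose (-1 : ℤ) k) := by
  have h : Ring.choose (k : ℤ) k = 1 := by simp [Ring.choose_natCast]
  rw [Ring.choose_neg, add_sub_cancel_left, h]
  exact isUnit_one.smul (k : ℤ).negOnePow

theorem prime_dvd_ringChoose_sub_one {p m : ℕ} (hp : p.Prime) {e : ℤ}
    (he : ¬ (p ^ m : ℤ) ∣ e) : (p : ℤ) ∣ Ring.choose (e - 1) (p ^ m - 1) := by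
  have habsorb : (p ^ m : ℤ) * Ring.choose e (p ^ m) = e * Ring.choose (e - 1) (p ^ m - 1) := by
    simpa using Ring.choose_smul_choose e (Nat.one_le_pow m p hp.pos)
  by_contra hdvd
  exact he ((Nat.prime_iff_prime_int.1 hp).pow_dvd_of_dvd_mul_right m hdvd (Dvd.intro _ habsorb))

end Congruences

section HammingDist

variable {ι : Type*} [Fintype ι]

theorem hammingDist_subtype_ne {β : ι → Type*} [∀ i, DecidableEq (β i)] [DecidableEq ι]
    {x y : ∀ i, β i} {i₀ : ι} (h : x i₀ = y i₀) :
    hammingDist (fun i : {i // i ≠ i₀} => x i) (fun i => y i) = hammingDist x y := by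
  simp only [hammingDist, card_filter]
  rw [Fintype.sum_eq_add_sum_subtype_ne _ i₀]
  simp [h]

theorem hammingDist_lt_card_of_apply_eq {β : ι → Type*} [∀ i, DecidableEq (β i)]
    {x y : ∀ i, β i} {i₀ : ι} (h : x i₀ = y i₀) : hammingDist x y < Fintype.card ι :=
  card_lt_univ_of_notMem (x := i₀) (by simpa using h)

theorem natCast_hammingDist_zmod_two (x y : ι → Bool) :
    (hammingDist x y : ZMod 2) = #{i | x i} + #{i | y i} := by
  simp only [hammingDist, card_filter, Nat.cast_sum, ← sum_add_distrib]
  refine sum_congr rfl fun i _ => ?_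
  cases x i <;> cases y i <;> simp [CharTwo.add_self_eq_zero]

theorem ringChoose_hammingDist_mem_cubeDegreeLE (x : ι → Bool) (s : ℚ) (k : ℕ) :
    (fun y => Ring.choose ((hammingDist x y : ℚ) / s - 1) k) ∈ cubeDegreeLE ℚ ι k := by
  have hdist := Submodule.sub_mem _
    (Submodule.smul_mem _ s⁻¹ (hammingDist_mem_cubeDegreeLE x)) (one_mem_cubeDegreeLE 1)
  simpa [div_eq_inv_mul] using ringChoose_mem_cubeDegreeLE hdist k

theorem linearIndependent_ringChoose_hammingDist {p m s : ℕ} (hp : p.Prime)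
    {D : Finset (ι → Bool)} (hs : ∀ x ∈ D, ∀ y ∈ D, s ∣ hammingDist x y)
    (hne : ∀ x ∈ D, ∀ y ∈ D, x ≠ y → ¬ s * p ^ m ∣ hammingDist x y) :
    LinearIndependent ℚ fun (x : D) (y : ι → Bool) =>
      Ring.choose ((hammingDist x.1 y : ℚ) / s - 1) (p ^ m - 1) := by
  have hp' : Prime (p : ℤ) := Nat.prime_iff_prime_int.1 hp
  let A : Matrix D D ℤ := fun x y =>
    Ring.choose (((hammingDist x.1 y.1 / s : ℕ) : ℤ) - 1) (p ^ m - 1)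
  refine linearIndependent_of_prime_dvd_offDiag hp' Subtype.val (A := A) (fun x y => ?_)
    (fun x hx => ?_) fun x y hxy => prime_dvd_ringChoose_sub_one hp ?_
  · simp only [A, Ring.map_choose, map_sub, map_natCast, map_one,
      Nat.cast_div_charZero (hs x x.2 y y.2)]
  · refine hp'.not_isUnit (isUnit_of_dvd_unit hx ?_)
    simpa [A] using isUnit_ringChoose_neg_one (p ^ m - 1)
  · have hndvd := hne x x.2 y y.2 (Subtype.coe_ne_coe.2 hxy)
    exact_mod_cast (Nat.dvd_div_iff_mul_dvd (hs x x.2 y y.2)).not.2 hndvd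

theorem card_le_of_dvd_hammingDist {p m s : ℕ} (hp : p.Prime) {D : Finset (ι → Bool)}
    (hs : ∀ x ∈ D, ∀ y ∈ D, s ∣ hammingDist x y)
    (hne : ∀ x ∈ D, ∀ y ∈ D, x ≠ y → ¬ s * p ^ m ∣ hammingDist x y) :
    #D ≤ ∑ i ∈ range (p ^ m), (Fintype.card ι).choose i := by
  let f (x : D) (y : ι → Bool) : ℚ := Ring.choose ((hammingDist x.1 y : ℚ) / s - 1) (p ^ m - 1)
  have hmem (x : D) : f x ∈ cubeDegreeLE ℚ ι (p ^ m - 1) :=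
    ringChoose_hammingDist_mem_cubeDegreeLE x.1 s (p ^ m - 1)
  have hindep : LinearIndependent ℚ f := linearIndependent_ringChoose_hammingDist hp hs hne
  calc
    #D = Module.finrank ℚ (Submodule.span ℚ (Set.range f)) := by
      rw [finrank_span_eq_card hindep, Fintype.card_coe]
    _ ≤ Module.finrank ℚ (cubeDegreeLE ℚ ι (p ^ m - 1)) :=
      Submodule.finrank_mono (Submodule.span_le.2 (Set.range_subset_iff.2 hmem))
    _ ≤ ∑ i ∈ range (p ^ m), (Fintype.card ι).choose i := by
      simpa [Nat.sub_add_cancel (Nat.one_le_pow m p hp.pos)] using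
        finrank_cubeDegreeLE_le (R := ℚ) (ι := ι) (p ^ m - 1)

theorem card_le_of_dvd_hammingDist_of_apply_eq {p m s : ℕ} (hp : p.Prime) {D : Finset (ι → Bool)}
    {i₀ : ι} (hi₀ : ∀ x ∈ D, ∀ y ∈ D, x i₀ = y i₀)
    (hs : ∀ x ∈ D, ∀ y ∈ D, s ∣ hammingDist x y)
    (hne : ∀ x ∈ D, ∀ y ∈ D, x ≠ y → ¬ s * p ^ m ∣ hammingDist x y) :
    #D ≤ ∑ i ∈ range (p ^ m), (Fintype.card ι - 1).choose i := by
  classical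
  let restrict (x : ι → Bool) (i : {i // i ≠ i₀}) : Bool := x i
  have hdist : ∀ x ∈ D, ∀ y ∈ D, hammingDist (restrict x) (restrict y) = hammingDist x y :=
    fun x hx y hy => hammingDist_subtype_ne (hi₀ x hx y hy)
  have hinj : Set.InjOn restrict D := fun x hx y hy hxy => by
    rwa [← hammingDist_eq_zero, ← hdist x hx y hy, hammingDist_eq_zero]
  have hcard : Fintype.card {i // i ≠ i₀} = Fintype.card ι - 1 := by simp
  rw [← card_image_of_injOn hinj, ← hcard]
  refine card_le_of_dvd_hammingDist (s := s) hp ?_ ?_ <;> simp only [forall_mem_image]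
  · intro x hx y hy
    simpa only [hdist x hx y hy] using hs x hx y hy
  · intro x hx y hy hxy
    simpa only [hdist x hx y hy] using hne x hx y hy (ne_of_apply_ne restrict hxy)

theorem card_le_of_two_dvd_hammingDist_of_apply_eq {p m : ℕ} (hp : p.Prime)
    (hι : Fintype.card ι = 4 * p ^ m) {D : Finset (ι → Bool)} {i₀ : ι}
    (hi₀ : ∀ x ∈ D, ∀ y ∈ D, x i₀ = y i₀) (htwo : ∀ x ∈ D, ∀ y ∈ D, 2 ∣ hammingDist x y)
    (hne : ∀ x ∈ D, ∀ y ∈ D, x ≠ y → hammingDist x y ≠ Fintype.card ι / 2) :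
    #D ≤ ∑ i ∈ range (p ^ m), (Fintype.card ι - 1).choose i := by
  refine card_le_of_dvd_hammingDist_of_apply_eq hp hi₀ htwo fun x hx y hy hxy hdvd => ?_
  have hlt := hammingDist_lt_card_of_apply_eq (hi₀ x hx y hy)
  have heq : hammingDist x y = 2 * p ^ m :=
    Nat.eq_of_dvd_of_lt_two_mul (hammingDist_ne_zero.2 hxy) hdvd (by omega)
  exact hne x hx y hy hxy (by omega)

end HammingDist

theorem indep_set_card_le_of_pow_two_general {ι : Type*} [Fintype ι] {p m : ℕ} (hp : p.Prime)
    (hι : Fintype.card ι = 4 * p ^ m) (C : Finset (ι → Bool))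
    (hC : ∀ x ∈ C, ∀ y ∈ C, x ≠ y → hammingDist x y ≠ Fintype.card ι / 2) :
    #C ≤ 4 * ∑ i ∈ range (p ^ m), (Fintype.card ι - 1).choose i := by
  classical
  have hq : 0 < p ^ m := pow_pos hp.pos m
  obtain ⟨i₀⟩ : Nonempty ι := Fintype.card_pos_iff.1 (by omega)
  let cls (x : ι → Bool) : Bool × ZMod 2 := (x i₀, #{i | x i})
  have hclass (c : Bool × ZMod 2) :
      #{x ∈ C | cls x = c} ≤ ∑ i ∈ range (p ^ m), (Fintype.card ι - 1).choose i := by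
    refine card_le_of_two_dvd_hammingDist_of_apply_eq (i₀ := i₀) hp hι ?_ ?_
      fun x hx y hy => hC x (filter_subset _ _ hx) y (filter_subset _ _ hy)
    all_goals
      intro x hx y hy
      have hxy : cls x = cls y := (mem_filter.1 hx).2.trans (mem_filter.1 hy).2.symm
      obtain ⟨hvalue, hparity⟩ := Prod.mk.inj hxy
    · exact hvalue
    · rw [← ZMod.natCast_eq_zero_iff, natCast_hammingDist_zmod_two, hparity,
        CharTwo.add_self_eq_zero]
  simpa [ZMod.card, mul_comm] using
    card_le_mul_card_image_of_maps_to (fun x _ => mem_univ (cls x)) _ fun c _ => hclass c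

theorem indep_set_card_le_of_pow_two (k : ℕ) (hk : 2 ≤ k)
    (C : Finset (Fin (2 ^ k) → Bool))
    (hC : ∀ x ∈ C, ∀ y ∈ C, x ≠ y → hammingDist x y ≠ 2 ^ k / 2) :
    C.card ≤ 4 * ∑ i ∈ Finset.range (2 ^ (k - 2)), Nat.choose (2 ^ k - 1) i := by
  have hcard : Fintype.card (Fin (2 ^ k)) = 4 * 2 ^ (k - 2) := by
    rw [Fintype.card_fin, ← pow_mul_pow_sub 2 hk]
    norm_num
  simpa using indep_set_card_le_of_pow_two_general Nat.prime_two hcard C (by simpa using hC)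
end

section
/- Let k ≥ 3, set r = 2^{k-2} - 1, and for an integer s define the integer φ(s) = (1/r!) · (s-1)(s-2)···(s-r) (the generalized binomial coefficient 'binom(s-1, r)', which is an integer for every integer s). Then for every integer s with 0 ≤ s ≤ 2^{k-1} - 1, φ(s) is odd if and only if s = 0 or s = 2^{k-2}. -/
/-!
Write `q = p ^ m`. Everything follows from the absorption identity
`n * C(s, n) = s * C(s - 1, n - 1)`. At `n = q` it shows that `q` divides `s * C(s - 1, q - 1)`,
hence divides `s` unless `p` divides `C(s - 1, q - 1)`. Conversely, if `q` divides `s`, the identity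
makes `p` divide `C(s, n)` for `0 < n < q`, since such an `n` is not divisible by `q`. Pascal's rule
then reads `C(s - 1, n) ≡ -C(s - 1, n - 1)` modulo `p`, so `C(s - 1, q - 1) ≡ ±1`.
-/

theorem natCast_dvd_of_pow_dvd_mul {R : Type*} [CommRing R] [IsAddTorsionFree R]
    {p m n : ℕ} {c : R} (hp : p.Prime) (hn₀ : n ≠ 0) (hn : n < p ^ m)
    (h : (p : R) ^ m ∣ n * c) : (p : R) ∣ c := by
  obtain ⟨a, u, hu, rfl⟩ := Nat.exists_eq_pow_mul_and_not_dvd hn₀ p hp.ne_one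
  have hu₀ : 0 < u := Nat.pos_of_ne_zero (right_ne_zero_of_mul hn₀)
  have ham : a < m := (Nat.pow_lt_pow_iff_right hp.one_lt).1
    ((Nat.le_mul_of_pos_right _ hu₀).trans_lt hn)
  obtain ⟨b, rfl⟩ := Nat.exists_eq_add_of_lt ham
  obtain ⟨d, hd⟩ := h
  have hcancel : (u : R) * c = (p : R) ^ (b + 1) * d := by
    refine nsmul_right_injective (pow_ne_zero a hp.ne_zero) ?_
    simp only [nsmul_eq_mul, ← mul_assoc]
    push_cast at hd ⊢
    rw [hd]
    ring
  have hcoprime : IsCoprime (p : R) u := ((hp.coprime_iff_not_dvd).2 hu).cast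
  exact hcoprime.dvd_of_dvd_mul_left
    (hcancel ▸ (dvd_pow_self (p : R) b.succ_ne_zero).mul_right d)

theorem nsmul_ringChoose_eq_mul {R : Type*} [NonAssocRing R] [Pow R ℕ] [NatPowAssoc R]
    [BinomialRing R] (s : R) {n : ℕ} (hn : n ≠ 0) :
    n • Ring.choose s n = s * Ring.choose (s - 1) (n - 1) := by
  simpa using Ring.choose_smul_choose s (Nat.one_le_iff_ne_zero.2 hn)

section BinomialRing

variable {R : Type*} [CommRing R] [BinomialRing R] {p m n : ℕ} {s : R}

theorem natCast_dvd_ringChoose_of_pow_dvd (hp : p.Prime) (hs : (p : R) ^ m ∣ s)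
    (hn₀ : n ≠ 0) (hn : n < p ^ m) : (p : R) ∣ Ring.choose s n := by
  have : IsAddTorsionFree R := BinomialRing.toIsAddTorsionFree
  refine natCast_dvd_of_pow_dvd_mul hp hn₀ hn ?_
  rw [← nsmul_eq_mul, nsmul_ringChoose_eq_mul s hn₀]
  exact hs.mul_right _

theorem natCast_dvd_ringChoose_sub_one_sub_neg_one_pow (hp : p.Prime)
    (hs : (p : R) ^ m ∣ s) (hn : n < p ^ m) :
    (p : R) ∣ Ring.choose (s - 1) n - (-1) ^ n := by
  induction n with
  | zero => simp
  | succ n ih =>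
    have pascal : Ring.choose s (n + 1) =
        Ring.choose (s - 1) n + Ring.choose (s - 1) (n + 1) := by
      simpa only [sub_add_cancel] using Ring.choose_succ_succ (s - 1) n
    have hstep : Ring.choose (s - 1) (n + 1) - (-1) ^ (n + 1) =
        Ring.choose s (n + 1) - (Ring.choose (s - 1) n - (-1) ^ n) := by
      rw [pascal]
      ring
    rw [hstep]
    exact dvd_sub (natCast_dvd_ringChoose_of_pow_dvd hp hs n.succ_ne_zero hn)
      (ih (n.lt_succ_self.trans hn))

theorem intBinomial_odd_iff_general [IsDomain R] (hp : p.Prime) (hpR : Prime (p : R))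
    (m : ℕ) (s : R) :
    ¬ (p : R) ∣ Ring.choose (s - 1) (p ^ m - 1) ↔ (p : R) ^ m ∣ s := by
  have hq : p ^ m ≠ 0 := pow_ne_zero m hp.ne_zero
  constructor
  · intro hchoose
    refine hpR.pow_dvd_of_dvd_mul_right m hchoose ?_
    rw [← nsmul_ringChoose_eq_mul s hq, nsmul_eq_mul, Nat.cast_pow]
    exact dvd_mul_right _ _
  · intro hs hchoose
    have hdvd := natCast_dvd_ringChoose_sub_one_sub_neg_one_pow hp hs (Nat.sub_one_lt hq)
    have hunit : IsUnit ((-1 : R) ^ (p ^ m - 1)) := isUnit_one.neg.pow _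
    exact hpR.not_isUnit (isUnit_of_dvd_unit ((dvd_sub_right hchoose).1 hdvd) hunit)

end BinomialRing

theorem odd_ringChoose_sub_one_two_pow_sub_one_iff (m : ℕ) (s : ℤ) :
    Odd (Ring.choose (s - 1) (2 ^ m - 1)) ↔ 2 ^ m ∣ s := by
  rw [← Int.not_even_iff_odd, even_iff_two_dvd]
  exact intBinomial_odd_iff_general Nat.prime_two Int.prime_two m s

theorem int_dvd_iff_eq_zero_or_eq_self {d s : ℤ} (hlower : -d < s) (hupper : s < 2 * d) :
    d ∣ s ↔ s = 0 ∨ s = d := by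
  constructor
  · rintro ⟨c, rfl⟩
    have hc : -1 < c := by nlinarith
    have hc' : c < 2 := by nlinarith
    interval_cases c <;> simp
  · rintro (rfl | rfl) <;> simp

theorem intBinomial_odd_iff (k : ℕ) (hk : 3 ≤ k) (s : ℤ)
    (hs0 : 0 ≤ s) (hs1 : s ≤ 2 ^ (k - 1) - 1) :
    Odd (Ring.choose (s - 1) (2 ^ (k - 2) - 1)) ↔ s = 0 ∨ s = 2 ^ (k - 2) := by
  have hpow : (2 : ℤ) ^ (k - 1) = 2 * 2 ^ (k - 2) := by
    rw [← pow_succ', show k - 2 + 1 = k - 1 by omega]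
  have hpos : (0 : ℤ) < 2 ^ (k - 2) := by positivity
  rw [odd_ringChoose_sub_one_two_pow_sub_one_iff,
    int_dvd_iff_eq_zero_or_eq_self (by linarith) (by linarith)]
end

section
/- Fix n ≥ 1 and for 0 ≤ j ≤ n let A_j be the 0-1 matrix indexed by (ZMod 2)^n with (A_j)_{x,y} = 1 if and only if the Hamming distance of x and y is j. Let f : {0, 1, …, n} → ℝ and let X = Σ_{j=0}^{n} f(j) A_j. Then the rank of X equals the number of z ∈ (ZMod 2)^n such that Σ_{j=0}^{n} f(j) K_j(w_z) ≠ 0, where w_z is the Hamming weight of z and K_j(i) = Σ_{h=0}^{j} (-1)^h C(i, h) C(n-i, j-h). -/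
open Finset Matrix

/-- The Krawtchouk polynomial value `K_j(i; n)`. -/
noncomputable def krawtchouk (n j i : ℕ) : ℝ :=
  ∑ h ∈ Finset.range (j + 1),
    (-1 : ℝ) ^ h * (Nat.choose i h) * (Nat.choose (n - i) (j - h))

/-- The distance-`j` adjacency matrix of the hypercube `(ZMod 2)^n`. -/
def hypercubeAdj (n j : ℕ) : Matrix (Fin n → ZMod 2) (Fin n → ZMod 2) ℝ :=
  fun x y => if hammingDist x y = j then 1 else 0

/-!
A matrix whose `(x, y)` entry depends only on `x - y` is diagonalized by the characters of the
group, with the Fourier coefficients of the underlying function as eigenvalues. For a function of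
the Hamming weight on `S ^ n`, where `S` is a finite ring of order `q` with a primitive character
`ψ`, the characters are `u ↦ ψ (z ⬝ᵥ u)`. The sum of `X ^ hammingNorm u * ψ (z ⬝ᵥ u)` over `u`
factors over the coordinates: `z i = 0` contributes `1 + (q - 1) X`, and `z i ≠ 0` contributes
`1 - X` because the values of a nontrivial character sum to zero. The coefficients of this product
are the `q`-ary Krawtchouk numbers. The hypercube is the case `S = ZMod 2`, `ψ a = (-1) ^ a`.
-/

open Polynomial

section Circulant

variable {G R K : Type*} [AddGroup G] [Fintype G] [CommSemiring R] [Field K]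

theorem dotProduct_circulant_col (χ : AddChar G R) (v : G → R) (y : G) :
    χ ⬝ᵥ (circulant v).col y = (χ ⬝ᵥ v) * χ y := by
  simp only [dotProduct, col_apply, circulant_apply, sum_mul]
  rw [← Equiv.sum_comp (Equiv.addRight y)]
  refine sum_congr rfl fun u _ => ?_
  rw [Equiv.coe_addRight, add_sub_cancel_right, AddChar.map_add_eq_mul, mul_right_comm]

/-- The matrix whose rows are the characters `χ z`. It is the character table of `G` when `χ`
enumerates the characters of `G`. -/
def characterTable {κ : Type*} (χ : κ → AddChar G R) : Matrix κ G R :=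
  of fun z => ⇑(χ z)

theorem characterTable_mul_circulant {κ : Type*} [Fintype κ] [DecidableEq κ]
    (χ : κ → AddChar G R) (v : G → R) :
    characterTable χ * circulant v = diagonal (fun z => χ z ⬝ᵥ v) * characterTable χ := by
  ext z y
  rw [diagonal_mul]
  exact dotProduct_circulant_col (χ z) v y

theorem isUnit_characterTable [DecidableEq G] {χ : G → AddChar G K}
    (hχ : Function.Injective χ) : IsUnit (characterTable χ) :=
  linearIndependent_rows_iff_isUnit.mp <|
    (linearIndependent_monoidHom (Multiplicative G) K).comp (fun z => (χ z).toMonoidHom) <|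
      AddChar.toMonoidHomEquiv.injective.comp hχ

theorem rank_circulant_eq_card_dotProduct_ne_zero [DecidableEq K] {χ : G → AddChar G K}
    (hχ : Function.Injective χ) (v : G → K) :
    (circulant v).rank = #{z | χ z ⬝ᵥ v ≠ 0} := by
  classical
  have hdet : IsUnit (characterTable χ).det :=
    (isUnit_iff_isUnit_det _).mp (isUnit_characterTable hχ)
  rw [← rank_mul_eq_right_of_isUnit_det _ _ hdet, characterTable_mul_circulant,
    rank_mul_eq_left_of_isUnit_det _ _ hdet, rank_diagonal, Fintype.card_subtype]

end Circulant

theorem circulant_comp_hammingNorm {ι S α : Type*} [Fintype ι] [AddCommGroup S] [DecidableEq S]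
    (f : ℕ → α) :
    circulant (fun u : ι → S => f (hammingNorm u)) = of fun x y => f (hammingDist x y) := by
  ext x y
  rw [circulant_apply, of_apply, hammingDist_comm, hammingDist_eq_hammingNorm, neg_add_eq_sub]

/-- The character `u ↦ ψ (z ⬝ᵥ u)` of `S ^ ι` attached to a character `ψ` of `S`. When `S` is finite
and `ψ` is primitive, these are the common eigenvectors of the Hamming scheme on `S ^ ι`. -/
def dotProductChar {ι S R : Type*} [Fintype ι] [NonUnitalNonAssocSemiring S] [Monoid R]
    (ψ : AddChar S R) (z : ι → S) : AddChar (ι → S) R where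
  toFun u := ψ (z ⬝ᵥ u)
  map_zero_eq_one' := by rw [dotProduct_zero, AddChar.map_zero_eq_one]
  map_add_eq_mul' u v := by rw [dotProduct_add, AddChar.map_add_eq_mul]

theorem dotProductChar_apply {ι S R : Type*} [Fintype ι] [NonUnitalNonAssocSemiring S] [Monoid R]
    (ψ : AddChar S R) (z u : ι → S) : dotProductChar ψ z u = ψ (z ⬝ᵥ u) :=
  rfl

theorem dotProductChar_eq_prod {ι S R : Type*} [Fintype ι] [NonUnitalNonAssocSemiring S]
    [CommMonoid R] (ψ : AddChar S R) (z u : ι → S) :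
    dotProductChar ψ z u = ∏ i, ψ (z i * u i) :=
  map_prod ψ.toMonoidHom (fun i => Multiplicative.ofAdd (z i * u i)) univ

theorem dotProductChar_injective {ι S R : Type*} [Fintype ι] [CommRing S] [CommMonoid R]
    {ψ : AddChar S R} (hψ : ψ.IsPrimitive) :
    Function.Injective (dotProductChar (ι := ι) ψ) := by
  classical
  intro z w hzw
  ext i
  refine AddChar.to_mulShift_inj_of_isPrimitive hψ (DFunLike.ext _ _ fun a => ?_)
  simpa only [dotProductChar_apply, dotProduct_single, AddChar.mulShift_apply] using
    DFunLike.congr_fun hzw (Pi.single i a)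

theorem prod_ite_eq_pow_hammingNorm {ι S M : Type*} [Fintype ι] [Zero S] [DecidableEq S]
    [CommMonoid M] (u : ι → S) (a b : M) :
    ∏ i, (if u i = 0 then a else b) =
      b ^ hammingNorm u * a ^ (Fintype.card ι - hammingNorm u) := by
  have hzeros : #{i | u i = 0} = Fintype.card ι - hammingNorm u := by
    rw [hammingNorm, ← card_univ, ← card_filter_add_card_filter_not (s := univ) (u · = 0),
      Nat.add_sub_cancel]
  rw [prod_ite, prod_const, prod_const, hzeros, mul_comm, hammingNorm]

/-- The polynomial `(1 - X) ^ i * (1 + (q - 1) X) ^ (n - i)`, whose `j`-th coefficient is the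
`q`-ary Krawtchouk number `K_j(i; n, q)`. The subtraction `q - 1` is taken in `R[X]`; the
subtraction `n - i` truncates, and only `i ≤ n` is meaningful. -/
noncomputable def krawtchoukGenPoly (R : Type*) [CommRing R] (q n i : ℕ) : R[X] :=
  (1 - X) ^ i * (1 + ((q : R[X]) - 1) * X) ^ (n - i)

section HammingScheme

variable {ι S R K : Type*} [Fintype ι] [CommRing S] [Fintype S] [DecidableEq S]
  [CommRing R] [IsDomain R] [Field K]

theorem sum_ite_mul_C_addChar_mul {ψ : AddChar S R} (hψ : ψ.IsPrimitive) (b : S) :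
    ∑ a, (if a = 0 then (1 : R[X]) else X) * C (ψ (b * a)) =
      if b = 0 then 1 + ((Fintype.card S : R[X]) - 1) * X else 1 - X := by
  calc ∑ a, (if a = 0 then (1 : R[X]) else X) * C (ψ (b * a))
      = ∑ a, (X * C (ψ (a * b)) + if a = 0 then 1 - X else 0) := by
        refine sum_congr rfl fun a _ => ?_
        split_ifs with ha
        · simp [ha]
        · rw [mul_comm b, add_zero]
    _ = X * C (∑ a, ψ (a * b)) + (1 - X) := by
        rw [sum_add_distrib, ← mul_sum, ← map_sum, sum_ite_eq' univ (0 : S), if_pos (mem_univ _)]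
    _ = if b = 0 then 1 + ((Fintype.card S : R[X]) - 1) * X else 1 - X := by
        rw [AddChar.sum_mulShift b hψ]
        split_ifs
        · rw [map_natCast]
          ring
        · simp

theorem sum_X_pow_hammingNorm_mul_C_dotProductChar [DecidableEq ι] {ψ : AddChar S R}
    (hψ : ψ.IsPrimitive) (z : ι → S) :
    ∑ u, X ^ hammingNorm u * C (dotProductChar ψ z u) =
      krawtchoukGenPoly R (Fintype.card S) (Fintype.card ι) (hammingNorm z) := by
  have hterm (u : ι → S) : X ^ hammingNorm u * C (dotProductChar ψ z u) =
      ∏ i, (if u i = 0 then (1 : R[X]) else X) * C (ψ (z i * u i)) := by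
    rw [prod_mul_distrib, prod_ite_eq_pow_hammingNorm, one_pow, mul_one, ← map_prod,
      dotProductChar_eq_prod]
  calc ∑ u, X ^ hammingNorm u * C (dotProductChar ψ z u)
      = ∏ i, ∑ a, (if a = 0 then (1 : R[X]) else X) * C (ψ (z i * a)) := by
        rw [prod_univ_sum, Fintype.piFinset_univ]
        exact sum_congr rfl fun u _ => hterm u
    _ = krawtchoukGenPoly R (Fintype.card S) (Fintype.card ι) (hammingNorm z) := by
        simp only [sum_ite_mul_C_addChar_mul hψ, prod_ite_eq_pow_hammingNorm, krawtchoukGenPoly]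

theorem dotProductChar_dotProduct_comp_hammingNorm [DecidableEq ι] {ψ : AddChar S R}
    (hψ : ψ.IsPrimitive) (z : ι → S) (f : ℕ → R) :
    dotProductChar ψ z ⬝ᵥ (fun u => f (hammingNorm u)) =
      ∑ j ∈ range (Fintype.card ι + 1), f j *
        (krawtchoukGenPoly R (Fintype.card S) (Fintype.card ι) (hammingNorm z)).coeff j := by
  simp only [← sum_X_pow_hammingNorm_mul_C_dotProductChar hψ, finsetSum_coeff, coeff_mul_C,
    coeff_X_pow, mul_sum]
  rw [sum_comm]
  refine sum_congr rfl fun u _ => ?_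
  have hu : hammingNorm u ∈ range (Fintype.card ι + 1) :=
    mem_range_succ_iff.mpr hammingNorm_le_card_fintype
  simp only [ite_mul, one_mul, zero_mul, mul_ite, mul_zero, sum_ite_eq', hu, if_true, mul_comm]

theorem rank_of_bose_mesner_combination_general [DecidableEq ι] [DecidableEq K] {ψ : AddChar S K}
    (hψ : ψ.IsPrimitive) (f : ℕ → K) :
    (of fun x y : ι → S => f (hammingDist x y)).rank =
      #{z : ι → S | ∑ j ∈ range (Fintype.card ι + 1), f j *
        (krawtchoukGenPoly K (Fintype.card S) (Fintype.card ι) (hammingNorm z)).coeff j ≠ 0} := by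
  rw [← circulant_comp_hammingNorm,
    rank_circulant_eq_card_dotProduct_ne_zero (dotProductChar_injective hψ)]
  simp only [dotProductChar_dotProduct_comp_hammingNorm hψ]

end HammingScheme

theorem coeff_one_sub_X_pow (R : Type*) [CommRing R] (m h : ℕ) :
    ((1 - X : R[X]) ^ m).coeff h = (-1) ^ h * m.choose h := by
  have hcomp : (1 - X : R[X]) ^ m = ((1 + X) ^ m).comp (C (-1) * X) := by simp [sub_eq_add_neg]
  rw [hcomp, comp_C_mul_X_coeff, coeff_one_add_X_pow, mul_comm]

theorem coeff_krawtchoukGenPoly_two (n j i : ℕ) :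
    (krawtchoukGenPoly ℝ 2 n i).coeff j = krawtchouk n j i := by
  have hbinary : krawtchoukGenPoly ℝ 2 n i = (1 - X) ^ i * (1 + X) ^ (n - i) := by
    norm_num [krawtchoukGenPoly]
  simp only [hbinary, coeff_mul, coeff_one_sub_X_pow, coeff_one_add_X_pow,
    Nat.sum_antidiagonal_eq_sum_range_succ_mk, krawtchouk]

theorem sum_smul_hypercubeAdj (n : ℕ) (f : ℕ → ℝ) :
    ∑ j ∈ range (n + 1), f j • hypercubeAdj n j = of fun x y => f (hammingDist x y) := by
  ext x y
  have hxy : hammingDist x y ≤ n := by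
    simpa only [Fintype.card_fin] using hammingDist_le_card_fintype (x := x) (y := y)
  simp [Matrix.sum_apply, hypercubeAdj, hxy]

theorem rank_of_bose_mesner_combination (n : ℕ) (hn : 1 ≤ n) (f : ℕ → ℝ) :
    (∑ j ∈ Finset.range (n + 1), f j • hypercubeAdj n j).rank =
      (Finset.univ.filter fun z : Fin n → ZMod 2 =>
        (∑ j ∈ Finset.range (n + 1), f j * krawtchouk n j (hammingNorm z)) ≠ 0).card := by
  have hsign := AddChar.zmodChar_primitive_of_primitive_root 2
    (IsPrimitiveRoot.neg_one (R := ℝ) 0 two_ne_zero.symm)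
  simpa only [sum_smul_hypercubeAdj, coeff_krawtchoukGenPoly_two, ZMod.card, Fintype.card_fin]
    using rank_of_bose_mesner_combination_general (ι := Fin n) hsign f
end
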